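/- arXiv:1801.06429 — 3 statements merged into one kernel-verified Lean document; each statement's English description precedes it below -/
import Mathlib

section
/- Let M be a 6×6 real symplectic matrix whose characteristic polynomial is divisible by (X−1)². Then there exist T₁, T₂ ∈ ℂ such that the characteristic polynomial of M, regarded over ℂ, factors as (X−1)²(X²−T₁X+1)(X²−T₂X+1), and T₁, T₂ are exactly the two roots of the quadratic q(s) = s² − (a−2)s + (b−2a+1); in particular T₁+T₂ = a−2 and T₁T₂ = b−2a+1 are real. -/
/-!
If `Mᵀ J M = J` with `J` invertible, then `M⁻¹ = J⁻¹ Mᵀ J` is similar to `Mᵀ`, so `M` and `M⁻¹` have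
the same characteristic polynomial; when `det M = 1` and the dimension is even, this polynomial is
therefore palindromic. In degree six a palindrome is determined by its coefficients `-a`, `b` of
`X⁵`, `X⁴` and by the coefficient of `X³`, and the root `1` fixes the latter. The quotient by
`(X - 1)²` is a palindromic quartic, which splits as `(X² - T₁X + 1)(X² - T₂X + 1)` as soon as
`T₁ + T₂` and `T₁T₂` have the right values.
-/

open Polynomial

/-- The standard `6 × 6` symplectic matrix `[[0, I₃], [-I₃, 0]]`. -/
def J6 : Matrix (Fin 6) (Fin 6) ℝ :=
  Matrix.of fun i j => if (j : ℕ) = (i : ℕ) + 3 then 1 else if (i : ℕ) = (j : ℕ) + 3 then -1 else 0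

open Finset in
lemma sum_powersetCard_two_univ {ι A : Type*} [Fintype ι] [LinearOrder ι] [AddCommMonoid A]
    (f : Finset ι → A) :
    ∑ s ∈ powersetCard 2 univ, f s = ∑ i, ∑ j, if i < j then f {i, j} else 0 := by
  rw [← Fintype.sum_prod_type', ← sum_filter]
  symm
  refine sum_nbij (fun p => {p.1, p.2}) ?mem ?inj ?surj fun _ _ => rfl
  case mem =>
    intro p hp
    simp [mem_powersetCard, card_pair (mem_filter.1 hp).2.ne]
  case inj =>
    rintro ⟨i, j⟩ hij ⟨k, l⟩ hkl h
    simp only [coe_filter, mem_univ, true_and, Set.mem_ofPred_eq] at hij hkl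
    have h : ({i, j} : Finset ι) = {k, l} := h
    have hi : i ∈ ({k, l} : Finset ι) := h ▸ mem_insert_self i {j}
    have hj : j ∈ ({k, l} : Finset ι) := h ▸ mem_insert_of_mem (mem_singleton_self j)
    grind
  case surj =>
    intro s hs
    obtain ⟨i, j, hne, rfl⟩ := card_eq_two.1 (mem_powersetCard.1 hs).2
    rcases hne.lt_or_gt with hlt | hlt
    · exact ⟨(i, j), by simpa using hlt, rfl⟩
    · exact ⟨(j, i), by simpa using hlt, pair_comm j i⟩

lemma coeff_natDegree_sub_of_reverse_eq_self {R : Type*} [Semiring R] {p : R[X]}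
    (hrev : p.reverse = p) {k : ℕ} (hk : k ≤ p.natDegree) :
    p.coeff (p.natDegree - k) = p.coeff k := by
  conv_rhs => rw [← hrev, coeff_reverse, revAt_le hk]

lemma monic_palindrome_six_eq {R : Type*} [CommRing R] {p : R[X]} (hp : p.Monic)
    (hdeg : p.natDegree = 6) (hrev : p.reverse = p) :
    p = X ^ 6 + 1 + C (p.coeff 5) * (X ^ 5 + X) + C (p.coeff 4) * (X ^ 4 + X ^ 2)
      + C (p.coeff 3) * X ^ 3 := by
  have coeff_symm (k : ℕ) (hk : k ≤ 6) : p.coeff k = p.coeff (6 - k) := by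
    rw [← hdeg] at hk ⊢
    exact (coeff_natDegree_sub_of_reverse_eq_self hrev hk).symm
  have h₆ : p.coeff 6 = 1 := hdeg ▸ hp.coeff_natDegree
  conv_lhs => rw [p.as_sum_range_C_mul_X_pow, hdeg]
  simp only [Finset.sum_range_succ, Finset.sum_range_zero, coeff_symm 0 (by norm_num),
    coeff_symm 1 (by norm_num), coeff_symm 2 (by norm_num), Nat.reduceSub, h₆, C_1]
  ring

lemma monic_palindrome_six_eq_sub_one_sq_mul {R : Type*} [CommRing R] {p : R[X]} (hp : p.Monic)
    (hdeg : p.natDegree = 6) (hrev : p.reverse = p) (hroot : p.IsRoot 1) {s t : R}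
    (hs : p.coeff 5 = -(s + 2)) (ht : p.coeff 4 = t + 2 * s + 3) :
    p = (X - 1) ^ 2 * (X ^ 4 - C s * X ^ 3 + C (t + 2) * X ^ 2 - C s * X + 1) := by
  have hform := monic_palindrome_six_eq hp hdeg hrev
  have h₃ : p.coeff 3 = -2 * (1 + p.coeff 5 + p.coeff 4) := by
    have heval : p.eval 1 = 0 := hroot
    rw [hform] at heval
    simp only [eval_add, eval_mul, eval_pow, eval_C, eval_X, eval_one, one_pow] at heval
    linear_combination heval
  rw [hform, h₃, hs, ht]
  simp only [C_add, C_neg, C_mul, C_1, C_ofNat]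
  ring

lemma quartic_palindrome_eq_mul {R : Type*} [CommRing R] (x y : R) :
    (X ^ 4 - C (x + y) * X ^ 3 + C (x * y + 2) * X ^ 2 - C (x + y) * X + 1 : R[X])
      = (X ^ 2 - C x * X + 1) * (X ^ 2 - C y * X + 1) := by
  simp only [C_add, C_mul, C_ofNat]
  ring

lemma exists_add_eq_and_mul_eq {K : Type*} [Field K] [IsAlgClosed K] (s t : K) :
    ∃ x y : K, x + y = s ∧ x * y = t := by
  have hdeg : (X ^ 2 - C s * X + C t).degree ≠ 0 := by
    have : (X ^ 2 - C s * X + C t).degree = 2 := by compute_degree!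
    simp [this]
  obtain ⟨x, hx⟩ := IsAlgClosed.exists_root _ hdeg
  have hx : x ^ 2 - s * x + t = 0 := by simpa using hx
  exact ⟨x, s - x, by ring, by linear_combination -hx⟩

lemma sq_sub_add_mul_add_mul_eq_zero_iff {R : Type*} [CommRing R] [NoZeroDivisors R]
    {x y z : R} : z ^ 2 - (x + y) * z + x * y = 0 ↔ z = x ∨ z = y := by
  rw [← sub_eq_zero (b := x), ← sub_eq_zero (b := y), ← mul_eq_zero]
  ring_nf

lemma det_submatrix_pair {n R : Type*} [DecidableEq n] [CommRing R] (M : Matrix n n R)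
    {i j : n} (hij : i ≠ j) :
    (M.submatrix (Subtype.val : ({i, j} : Finset n) → n) Subtype.val).det
      = M i i * M j j - M i j * M j i := by
  let f : Fin 2 → ({i, j} : Finset n) := ![⟨i, by simp⟩, ⟨j, by simp⟩]
  have hf : f.Bijective := by
    refine (Fintype.bijective_iff_injective_and_card f).2
      ⟨?_, by rw [Fintype.card_fin, Fintype.card_coe, Finset.card_pair hij]⟩
    intro k l
    fin_cases k <;> fin_cases l <;> simp [f, hij, hij.symm]
  rw [← Matrix.det_submatrix_equiv_self (Equiv.ofBijective f hf), Matrix.det_fin_two]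
  simp [f]

section

variable {n R : Type*} [Fintype n] [CommRing R]

lemma charpoly_coeff_card_sub_two [LinearOrder n] (M : Matrix n n R)
    (hn : 2 ≤ Fintype.card n) :
    M.charpoly.coeff (Fintype.card n - 2)
      = ∑ i, ∑ j, if i < j then M i i * M j j - M i j * M j i else 0 := by
  rw [Matrix.charpoly_coeff_eq_sum_minors M 2 hn, neg_one_sq, one_mul, sum_powersetCard_two_univ]
  refine Finset.sum_congr rfl fun i _ => Finset.sum_congr rfl fun j _ => ?_
  split_ifs with hij
  · exact det_submatrix_pair M hij.ne
  · rfl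

lemma reverse_charpoly_of_transpose_mul_mul_self [DecidableEq n] {J M : Matrix n n R}
    (hJ : IsUnit J) (hM : M.transpose * J * M = J) :
    M.charpoly.reverse = (-1) ^ Fintype.card n * C M.det * M.charpoly := by
  obtain ⟨J, rfl⟩ := hJ
  have hleft : (J⁻¹).val * M.transpose * J.val * M = 1 := by
    rw [Matrix.mul_assoc, Matrix.mul_assoc, ← Matrix.mul_assoc M.transpose, hM, J.inv_mul]
  have hunit : IsUnit M := .of_mul_eq_one_right _ hleft
  have hdet : IsUnit M.det := (Matrix.isUnit_iff_isUnit_det M).1 hunit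
  have hinv : M⁻¹.charpoly = M.charpoly := by
    rw [Matrix.inv_eq_left_inv hleft, Matrix.coe_units_inv, Matrix.charpoly_units_conj',
      Matrix.charpoly_transpose]
  calc M.charpoly.reverse
      = ((-1) ^ Fintype.card n * (-1) ^ Fintype.card n)
          * C (M.det * Ring.inverse M.det) * M.charpolyRev := by
        rw [Matrix.reverse_charpoly, ← mul_pow, Ring.mul_inverse_cancel _ hdet]
        simp
    _ = (-1) ^ Fintype.card n * C M.det * M.charpoly := by
        rw [← hinv, Matrix.charpoly_inv M hunit, C_mul]
        ring

end

section

variable {l n R : Type*} [DecidableEq l] [Finite l] [DecidableEq n] [Fintype n] [CommRing R]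

lemma isUnit_of_submatrix_eq_neg_J {J : Matrix n n R} (e : l ⊕ l ≃ n)
    (hJ : J.submatrix e e = -Matrix.J l R) : IsUnit J := by
  cases nonempty_fintype l
  rw [← Matrix.isUnit_submatrix_equiv e e, hJ, IsUnit.neg_iff, Matrix.isUnit_iff_isUnit_det]
  exact Matrix.isUnit_det_J l R

lemma det_eq_one_of_submatrix_eq_neg_J {J M : Matrix n n R} (e : l ⊕ l ≃ n)
    (hJ : J.submatrix e e = -Matrix.J l R) (hM : M.transpose * J * M = J) : M.det = 1 := by
  cases nonempty_fintype l
  have hsub : (M.submatrix e e).transpose * J.submatrix e e * M.submatrix e e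
      = J.submatrix e e := by
    rw [Matrix.transpose_submatrix, Matrix.submatrix_mul_equiv, Matrix.submatrix_mul_equiv, hM]
  rw [← Matrix.det_submatrix_equiv_self e M]
  apply SymplecticGroup.det_eq_one
  rw [SymplecticGroup.mem_iff']
  simpa [hJ] using hsub

end

/-- The splitting of the coordinates of `ℝ⁶` into positions and momenta, which identifies `J6` with
the negative of Mathlib's `Matrix.J (Fin 3) ℝ`. -/
def positionsSumMomenta : Fin 3 ⊕ Fin 3 ≃ Fin 6 := finSumFinEquiv

lemma val_positionsSumMomenta_inl (i : Fin 3) : (positionsSumMomenta (.inl i) : ℕ) = i := rfl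

lemma val_positionsSumMomenta_inr (i : Fin 3) : (positionsSumMomenta (.inr i) : ℕ) = 3 + i := rfl

lemma submatrix_J6 :
    J6.submatrix positionsSumMomenta positionsSumMomenta = -Matrix.J (Fin 3) ℝ := by
  ext (i | i) (j | j) <;> fin_cases i <;> fin_cases j <;>
    simp [J6, Matrix.J, val_positionsSumMomenta_inl, val_positionsSumMomenta_inr]

theorem charpoly_factorization_symplectic_general {n R K : Type*} [Fintype n] [LinearOrder n]
    [CommRing R] [Field K] [IsAlgClosed K] [Algebra R K] (hn : Fintype.card n = 6)
    {J M : Matrix n n R} (hJ : IsUnit J) (hM : M.transpose * J * M = J) (hdet : M.det = 1)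
    (hroot : M.charpoly.IsRoot 1) {a b : R} (ha : a = M.trace)
    (hb : b = ∑ i, ∑ j, if i < j then M i i * M j j - M i j * M j i else 0) :
    ∃ T₁ T₂ : K,
      M.charpoly.map (algebraMap R K)
        = (X - 1) ^ 2 * (X ^ 2 - C T₁ * X + 1) * (X ^ 2 - C T₂ * X + 1) ∧
      T₁ + T₂ = algebraMap R K a - 2 ∧
      T₁ * T₂ = algebraMap R K b - 2 * algebraMap R K a + 1 ∧
      ∀ s : K, s ^ 2 - (algebraMap R K a - 2) * s
        + (algebraMap R K b - 2 * algebraMap R K a + 1) = 0 ↔ s = T₁ ∨ s = T₂ := by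
  have := (algebraMap R K).domain_nontrivial
  have : Nonempty n := Fintype.card_pos_iff.1 (by omega)
  have hdeg : M.charpoly.natDegree = 6 := by rw [M.charpoly_natDegree_eq_dim, hn]
  have hrev : M.charpoly.reverse = M.charpoly := by
    simp [reverse_charpoly_of_transpose_mul_mul_self hJ hM, hdet, hn,
      Even.neg_pow (by decide : Even 6)]
  have h₅ : M.charpoly.coeff 5 = -(a - 2 + 2) := by
    simp [ha, M.trace_eq_neg_charpoly_coeff, hn]
  have h₄ : M.charpoly.coeff 4 = b - 2 * a + 1 + 2 * (a - 2) + 3 := by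
    have := charpoly_coeff_card_sub_two M (by omega)
    rw [hn, ← hb] at this
    linear_combination this
  obtain ⟨T₁, T₂, hadd, hmul⟩ := exists_add_eq_and_mul_eq
    (algebraMap R K a - 2) (algebraMap R K b - 2 * algebraMap R K a + 1)
  refine ⟨T₁, T₂, ?_, hadd, hmul, fun s => ?_⟩
  · rw [monic_palindrome_six_eq_sub_one_sq_mul M.charpoly_monic hdeg hrev hroot h₅ h₄, mul_assoc,
      ← quartic_palindrome_eq_mul, hadd, hmul]
    simp [map_ofNat]
  · rw [← hadd, ← hmul, sq_sub_add_mul_add_mul_eq_zero_iff]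

/-- For a `6 × 6` real symplectic matrix `M` whose characteristic polynomial is divisible by
`(X-1)²`, the characteristic polynomial factors over `ℂ` as
`(X-1)²(X² - T₁X + 1)(X² - T₂X + 1)`, where `T₁, T₂` are exactly the two roots of
`q(s) = s² - (a-2)s + (b-2a+1)`; in particular `T₁ + T₂ = a - 2` and `T₁T₂ = b - 2a + 1`
are real. -/
theorem charpoly_factorization_symplectic
    (M : Matrix (Fin 6) (Fin 6) ℝ)
    (hsymp : M.transpose * J6 * M = J6)
    (hdvd : (X - 1) ^ 2 ∣ M.charpoly)
    (a b : ℝ)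
    (ha : a = Matrix.trace M)
    (hb : b = ∑ i : Fin 6, ∑ j : Fin 6,
      if i < j then M i i * M j j - M i j * M j i else 0) :
    ∃ T₁ T₂ : ℂ,
      M.charpoly.map (algebraMap ℝ ℂ)
        = (X - 1) ^ 2 * (X ^ 2 - C T₁ * X + 1) * (X ^ 2 - C T₂ * X + 1) ∧
      T₁ + T₂ = (a : ℂ) - 2 ∧
      T₁ * T₂ = (b : ℂ) - 2 * a + 1 ∧
      (∀ s : ℂ, s ^ 2 - ((a : ℂ) - 2) * s + ((b : ℂ) - 2 * a + 1) = 0 ↔ (s = T₁ ∨ s = T₂)) := by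
  exact charpoly_factorization_symplectic_general (Fintype.card_fin 6)
    (isUnit_of_submatrix_eq_neg_J _ submatrix_J6) hsymp
    (det_eq_one_of_submatrix_eq_neg_J _ submatrix_J6 hsymp)
    (dvd_iff_isRoot.1 ((dvd_pow_self _ two_ne_zero).trans hdvd)) ha hb
end

section
/- Let u ∈ ℝ³ ∖ Γ. Then the gradient of U at u equals the Newtonian force on the generating particle exerted by its symmetric copies: ∇U(u) = Σ_{R∈𝓡∖{I}} (Ru − u)/|Ru − u|³. -/
open scoped Classical

/-- Euclidean 3-space. -/
abbrev E3 : Type := EuclideanSpace ℝ (Fin 3)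

/-- The collision set `Γ = {u : (R - I)u = 0 for some R ∈ 𝓡 \ {I}}` associated with a
subgroup `𝓡` of the orthogonal group of `ℝ³`. -/
def collisionSet (𝓡 : Subgroup (E3 ≃ₗᵢ[ℝ] E3)) : Set E3 :=
  {u | ∃ R : 𝓡, (R : E3 ≃ₗᵢ[ℝ] E3) ≠ 1 ∧ (R : E3 ≃ₗᵢ[ℝ] E3) u = u}

/-- The potential `U(u) = (1/2) Σ_{R ∈ 𝓡 \ {I}} 1/|(R - I)u|`. -/
noncomputable def pot (𝓡 : Subgroup (E3 ≃ₗᵢ[ℝ] E3)) [Fintype 𝓡] (u : E3) : ℝ :=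
  (1 / 2) * ∑ R : 𝓡, if (R : E3 ≃ₗᵢ[ℝ] E3) = 1 then 0
    else ‖(R : E3 ≃ₗᵢ[ℝ] E3) u - u‖⁻¹

/-!
Each mutual potential `‖R v - v‖⁻¹` feels a displacement of `v` through both of its particles: its
gradient at `u` is the force of the copy `R u` plus, once the reaction on `R u` is carried back to
`u` by `R⁻¹`, the force of the copy `R⁻¹ u`. Summing over a set of isometries closed under inverses
counts every force twice, which the factor `1 / 2` corrects.
-/

section NewtonianForce

variable {E F : Type*} [NormedAddCommGroup E] [NormedSpace ℝ E]
  [NormedAddCommGroup F] [NormedSpace ℝ F]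

/-- The inverse-square force `x / |x|³` with which a unit mass at displacement `x` attracts a unit
mass at the origin; its junk value at `x = 0` is `0`. -/
noncomputable def newtonianForce (x : F) : F := (‖x‖ ^ 3)⁻¹ • x

theorem newtonianForce_neg (x : F) : newtonianForce (-x) = -newtonianForce x := by
  simp only [newtonianForce, norm_neg, smul_neg]

theorem newtonianForce_map (A : E →ₗᵢ[ℝ] F) (x : E) :
    newtonianForce (A x) = A (newtonianForce x) := by
  simp only [newtonianForce, A.norm_map, map_smul]

end NewtonianForce

section GradientCalculus

variable {𝕜 E F : Type*} [RCLike 𝕜]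
  [NormedAddCommGroup E] [InnerProductSpace 𝕜 E] [CompleteSpace E]
  [NormedAddCommGroup F] [InnerProductSpace 𝕜 F] [CompleteSpace F]

theorem hasGradientAt_comp_continuousLinearMap {f : F → 𝕜} {f' : F} (L : E →L[𝕜] F) {x : E}
    (hf : HasGradientAt f f' (L x)) :
    HasGradientAt (fun y => f (L y)) (L.adjoint f') x := by
  refine (hf.hasFDerivAt.comp x L.hasFDerivAt).congr_fderiv ?_
  ext y
  simp [ContinuousLinearMap.adjoint_inner_left]

theorem hasGradientAt_const_mul {f : F → 𝕜} {f' x : F} (c : 𝕜) (hf : HasGradientAt f f' x) :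
    HasGradientAt (fun y => c * f y) (starRingEnd 𝕜 c • f') x := by
  rw [hasGradientAt_iff_hasFDerivAt, map_smulₛₗ, RCLike.conj_conj]
  exact hf.hasFDerivAt.const_mul c

theorem hasGradientAt_fun_sum {ι : Type*} {s : Finset ι} {f : ι → F → 𝕜} {f' : ι → F} {x : F}
    (hf : ∀ i ∈ s, HasGradientAt (f i) (f' i) x) :
    HasGradientAt (fun y => ∑ i ∈ s, f i y) (∑ i ∈ s, f' i) x := by
  rw [hasGradientAt_iff_hasFDerivAt, map_sum]
  exact HasFDerivAt.fun_sum fun i hi => (hf i hi).hasFDerivAt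

end GradientCalculus

variable {F : Type*} [NormedAddCommGroup F] [InnerProductSpace ℝ F] [CompleteSpace F]

section Norm

theorem hasGradientAt_norm {x : F} (hx : x ≠ 0) :
    HasGradientAt (fun y : F => ‖y‖) (‖x‖⁻¹ • x) x := by
  have hsq : ‖x‖ ^ 2 ≠ 0 := pow_ne_zero 2 (norm_ne_zero_iff.mpr hx)
  have hsqrt := (hasStrictFDerivAt_norm_sq x).hasFDerivAt.sqrt hsq
  simp only [Real.sqrt_sq (norm_nonneg _)] at hsqrt
  refine hsqrt.congr_fderiv ?_
  ext y
  simp only [one_div, mul_inv_rev, smul_apply, coe_innerSL_apply, nsmul_eq_mul, Nat.cast_ofNat,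
    smul_eq_mul, map_smul, InnerProductSpace.toDual_apply_apply]
  field_simp

theorem hasGradientAt_comp_norm {φ : ℝ → ℝ} {φ' : ℝ} {x : F} (hφ : HasDerivAt φ φ' ‖x‖)
    (hx : x ≠ 0) : HasGradientAt (fun y : F => φ ‖y‖) ((φ' / ‖x‖) • x) x := by
  rw [div_eq_mul_inv, mul_smul, hasGradientAt_iff_hasFDerivAt, map_smulₛₗ]
  exact hφ.comp_hasFDerivAt x (hasGradientAt_norm hx).hasFDerivAt

theorem hasGradientAt_inv_norm {x : F} (hx : x ≠ 0) :
    HasGradientAt (fun y : F => ‖y‖⁻¹) (-newtonianForce x) x := by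
  have hcoeff : -(‖x‖ ^ 2)⁻¹ / ‖x‖ = -(‖x‖ ^ 3)⁻¹ := by ring
  have h := hasGradientAt_comp_norm (hasDerivAt_inv (norm_ne_zero_iff.mpr hx)) hx
  rwa [hcoeff, neg_smul] at h

end Norm

section SymmetricCopies

variable {G : Type*} [Group G] (ρ : G →* F ≃ₗᵢ[ℝ] F) {f : F → ℝ} {K : F → F}

theorem hasGradientAt_comp_displacement (hK_equivariant : ∀ g x, K (ρ g x) = ρ g (K x))
    (hK_odd : ∀ x, K (-x) = -K x) {g : G} {u : F}
    (hf : HasGradientAt f (-K (ρ g u - u)) (ρ g u - u)) :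
    HasGradientAt (fun v => f (ρ g v - v)) (K (ρ g u - u) + K (ρ g⁻¹ u - u)) u := by
  let L : F →L[ℝ] F := (ρ g).toContinuousLinearEquiv - ContinuousLinearMap.id ℝ F
  have hadjoint (y : F) : L.adjoint y = ρ g⁻¹ y - y := by
    simp only [L, map_sub, (ρ g).adjoint_eq_symm, ContinuousLinearMap.adjoint_id, map_inv]
    rfl
  have hcarried_back : ρ g⁻¹ (ρ g u - u) = -(ρ g⁻¹ u - u) := by simp
  have hreaction : ρ g⁻¹ (K (ρ g u - u)) = -K (ρ g⁻¹ u - u) := by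
    rw [← hK_equivariant, hcarried_back, hK_odd]
  have hgradient : L.adjoint (-K (ρ g u - u)) = K (ρ g u - u) + K (ρ g⁻¹ u - u) := by
    rw [hadjoint, map_neg, hreaction, neg_neg, sub_neg_eq_add, add_comm]
  rw [← hgradient]
  exact hasGradientAt_comp_continuousLinearMap L hf

theorem hasGradientAt_half_sum_comp_displacement
    (hK_equivariant : ∀ g x, K (ρ g x) = ρ g (K x)) (hK_odd : ∀ x, K (-x) = -K x)
    {s : Finset G} (hs : ∀ g ∈ s, g⁻¹ ∈ s) {u : F}
    (hf : ∀ g ∈ s, HasGradientAt f (-K (ρ g u - u)) (ρ g u - u)) :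
    HasGradientAt (fun v => (1 / 2) * ∑ g ∈ s, f (ρ g v - v)) (∑ g ∈ s, K (ρ g u - u)) u := by
  have hinv : ∑ g ∈ s, K (ρ g⁻¹ u - u) = ∑ g ∈ s, K (ρ g u - u) :=
    Finset.sum_nbij' (·⁻¹) (·⁻¹) hs hs (fun g _ => inv_inv g) (fun g _ => inv_inv g)
      (fun _ _ => rfl)
  have htwice : (1 / 2 : ℝ) • ∑ g ∈ s, (K (ρ g u - u) + K (ρ g⁻¹ u - u))
      = ∑ g ∈ s, K (ρ g u - u) := by
    rw [Finset.sum_add_distrib, hinv, ← two_smul ℝ, smul_smul]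
    norm_num
  rw [← htwice]
  exact hasGradientAt_const_mul _ <| hasGradientAt_fun_sum fun g hg =>
    hasGradientAt_comp_displacement ρ hK_equivariant hK_odd (hf g hg)

theorem gradient_pot_eq_newtonian_force_general (s : Finset G) (hs : ∀ g ∈ s, g⁻¹ ∈ s) (u : F)
    (hu : ∀ g ∈ s, ρ g u ≠ u) :
    HasGradientAt (fun v => (1 / 2) * ∑ g ∈ s, ‖ρ g v - v‖⁻¹)
      (∑ g ∈ s, (‖ρ g u - u‖ ^ 3)⁻¹ • (ρ g u - u)) u :=
  hasGradientAt_half_sum_comp_displacement ρ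
    (fun g => newtonianForce_map (ρ g).toLinearIsometry) newtonianForce_neg hs
    fun g hg => hasGradientAt_inv_norm (sub_ne_zero.mpr (hu g hg))

end SymmetricCopies

/-- For `u ∉ Γ`, the gradient of `U` equals the Newtonian force exerted on the generating
particle by its symmetric copies: `∇U(u) = Σ_{R ∈ 𝓡\{I}} (Ru - u)/|Ru - u|³`. -/
theorem gradient_pot_eq_newtonian_force
    (𝓡 : Subgroup (E3 ≃ₗᵢ[ℝ] E3)) [Fintype 𝓡]
    (u : E3) (hu : u ∉ collisionSet 𝓡) :
    gradient (pot 𝓡) u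
      = ∑ R : 𝓡, if (R : E3 ≃ₗᵢ[ℝ] E3) = 1 then 0
          else (‖(R : E3 ≃ₗᵢ[ℝ] E3) u - u‖ ^ 3)⁻¹ • ((R : E3 ≃ₗᵢ[ℝ] E3) u - u) := by
  unfold pot
  simpa [Finset.sum_filter] using
    (gradient_pot_eq_newtonian_force_general 𝓡.subtype {R | R ≠ 1} (by simp) u
      fun R hR hRu => hu ⟨R, by simpa using hR, hRu⟩).gradient
end

section
/- Let A : ℝ → ℝ^{n×n} be continuous, let S be an invertible n×n real matrix, let τ > 0 and let M ≥ 1 be an integer with S^M = I. Assume A(t+τ) = S A(t) S⁻¹ for all t ∈ ℝ. Let Φ : ℝ → ℝ^{n×n} be the fundamental solution, i.e. Φ'(t) = A(t)Φ(t) for all t and Φ(0) = I. Then Φ(Mτ) = (S⁻¹ Φ(τ))^M; in particular the monodromy matrix over the period T = Mτ factors through the matrix S⁻¹Φ(T/M). -/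
/-!
If `Φ` is the fundamental solution of `x' = A x` and `A (t + τ) = S A(t) S⁻¹`, then
`t ↦ S⁻¹ Φ(t + τ)` solves the same equation with initial value `P = S⁻¹ Φ(τ)`. By uniqueness it
equals `Φ(t) P`, that is, `Φ(t + τ) = S Φ(t) P`. Iterating gives `Φ(t + kτ) = Sᵏ Φ(t) Pᵏ`, and
for `t = 0` and `S ^ M = 1` the outer factor disappears.
-/

theorem hasDerivAt_matrix {𝕜 m n E : Type*} [NontriviallyNormedField 𝕜] [Finite m] [Finite n]
    [NormedAddCommGroup E] [NormedSpace 𝕜 E] {F : 𝕜 → Matrix m n E} {F' : Matrix m n E} {t : 𝕜} :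
    HasDerivAt F F' t ↔ ∀ i j, HasDerivAt (fun s => F s i j) (F' i j) t := by
  have := Fintype.ofFinite m
  have := Fintype.ofFinite n
  exact hasDerivAt_pi.trans (forall_congr' fun _ => hasDerivAt_pi)

section LinearODE

variable {E : Type*} [NormedAddCommGroup E] [NormedSpace ℝ E]

theorem eq_of_hasDerivAt_linear {A : ℝ → E →L[ℝ] E} (hA : Continuous A) {x y : ℝ → E}
    (hx : ∀ t, HasDerivAt x (A t (x t)) t) (hy : ∀ t, HasDerivAt y (A t (y t)) t)
    {t₀ : ℝ} (hxy : x t₀ = y t₀) : x = y := by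
  funext t
  -- Mathlib's global uniqueness theorem wants a Lipschitz constant uniform in time, which `A` only
  -- has on bounded intervals.
  obtain ⟨a, ha⟩ := exists_lt (min t₀ t)
  obtain ⟨b, hb⟩ := exists_gt (max t₀ t)
  obtain ⟨hat₀, hat⟩ := lt_min_iff.1 ha
  obtain ⟨ht₀b, htb⟩ := max_lt_iff.1 hb
  obtain ⟨K, hK⟩ := isCompact_Icc.exists_bound_of_continuousOn (hA.continuousOn (s := Set.Icc a b))
  have lipschitz : ∀ s ∈ Set.Ioo a b, LipschitzOnWith K.toNNReal (A s) Set.univ := fun s hs =>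
    ((A s).lipschitz.weaken
      (NNReal.le_toNNReal_of_coe_le (hK s (Set.Ioo_subset_Icc_self hs)))).lipschitzOnWith
  exact ODE_solution_unique_of_mem_Ioo lipschitz ⟨hat₀, ht₀b⟩
    (fun s _ => ⟨hx s, Set.mem_univ _⟩) (fun s _ => ⟨hy s, Set.mem_univ _⟩) hxy ⟨hat, htb⟩

end LinearODE

section FundamentalSolution

variable {R : Type*} [NormedRing R] [NormedAlgebra ℝ R]

/-- The fundamental solution of the linear equation `x' = A x`, normalized at time `0`. Values
lie in a normed algebra; the matrix case is `R = ℝ^{n×n}` with any submultiplicative norm. -/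
structure IsFundamentalSolution (A Φ : ℝ → R) : Prop where
  map_zero : Φ 0 = 1
  hasDerivAt : ∀ t, HasDerivAt Φ (A t * Φ t) t

namespace IsFundamentalSolution

variable {A Φ : ℝ → R}

theorem eq_mul_of_hasDerivAt (hΦ : IsFundamentalSolution A Φ) (hA : Continuous A) {Ψ : ℝ → R}
    (hΨ : ∀ t, HasDerivAt Ψ (A t * Ψ t) t) (t : ℝ) : Ψ t = Φ t * Ψ 0 := by
  have hΦΨ : ∀ s, HasDerivAt (fun s => Φ s * Ψ 0) (A s * (Φ s * Ψ 0)) s := fun s => by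
    simpa only [mul_assoc] using (hΦ.hasDerivAt s).mul_const (Ψ 0)
  have hA_mul : Continuous fun s => ContinuousLinearMap.mul ℝ R (A s) :=
    (ContinuousLinearMap.mul ℝ R).continuous.comp hA
  have initial : Ψ 0 = Φ 0 * Ψ 0 := by rw [hΦ.map_zero, one_mul]
  exact congrFun (eq_of_hasDerivAt_linear hA_mul hΨ hΦΨ initial) t

variable {S : Rˣ} {τ : ℝ}

theorem apply_add (hΦ : IsFundamentalSolution A Φ) (hA : Continuous A)
    (hAτ : ∀ t, A (t + τ) = S * A t * ↑S⁻¹) (t : ℝ) :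
    Φ (t + τ) = S * Φ t * (↑S⁻¹ * Φ τ) := by
  have hΨ : ∀ s, HasDerivAt (fun s => ↑S⁻¹ * Φ (s + τ)) (A s * (↑S⁻¹ * Φ (s + τ))) s := fun s => by
    simpa only [hAτ, mul_assoc, Units.inv_mul_cancel_left] using
      ((hΦ.hasDerivAt (s + τ)).comp_add_const s τ).const_mul (↑S⁻¹ : R)
  have hP : ↑S⁻¹ * Φ (t + τ) = Φ t * (↑S⁻¹ * Φ τ) := by
    simpa only [zero_add] using hΦ.eq_mul_of_hasDerivAt hA hΨ t
  rw [mul_assoc, ← hP, Units.mul_inv_cancel_left]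

end IsFundamentalSolution

theorem monodromy_factorization_general {A Φ : ℝ → R} {S : Rˣ} {τ : ℝ} (hA : Continuous A)
    (hAτ : ∀ t, A (t + τ) = S * A t * ↑S⁻¹) (hΦ : IsFundamentalSolution A Φ) (t : ℝ) (k : ℕ) :
    Φ (t + k * τ) = (S : R) ^ k * Φ t * (↑S⁻¹ * Φ τ) ^ k := by
  induction k with
  | zero => simp
  | succ k ih =>
    calc Φ (t + (k + 1 : ℕ) * τ)
      _ = Φ (t + k * τ + τ) := by push_cast; ring_nf
      _ = S * Φ (t + k * τ) * (↑S⁻¹ * Φ τ) := hΦ.apply_add hA hAτ _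
      _ = (S : R) ^ (k + 1) * Φ t * (↑S⁻¹ * Φ τ) ^ (k + 1) := by
        rw [ih, pow_succ' (S : R), pow_succ _ k]
        simp only [mul_assoc]

end FundamentalSolution

/-- Factorization of the monodromy matrix of a linear ODE with a symmetry:
if `A : ℝ → ℝ^{n×n}` is continuous, `S` is invertible with `S^M = I` (`M ≥ 1`),
`A(t+τ) = S A(t) S⁻¹` for all `t`, and `Φ` is the fundamental solution
(`Φ' = AΦ`, `Φ(0) = I`, entrywise), then `Φ(Mτ) = (S⁻¹ Φ(τ))^M`. -/
theorem monodromy_factorization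
    (n : ℕ) (A : ℝ → Matrix (Fin n) (Fin n) ℝ) (hA : Continuous A)
    (S : Matrix (Fin n) (Fin n) ℝ) (hS : IsUnit S)
    (τ : ℝ) (hτ : 0 < τ)
    (M : ℕ) (hM : 1 ≤ M) (hSM : S ^ M = 1)
    (hAper : ∀ t : ℝ, A (t + τ) = S * A t * S⁻¹)
    (Φ : ℝ → Matrix (Fin n) (Fin n) ℝ)
    (hΦ0 : Φ 0 = 1)
    (hΦ : ∀ (t : ℝ) (i j : Fin n), HasDerivAt (fun s => Φ s i j) ((A t * Φ t) i j) t) :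
    Φ ((M : ℝ) * τ) = (S⁻¹ * Φ τ) ^ M := by
  open scoped Matrix.Norms.Operator in
  obtain ⟨S, rfl⟩ := hS
  have hfund : IsFundamentalSolution A Φ := ⟨hΦ0, fun t => hasDerivAt_matrix.2 (hΦ t)⟩
  simp only [← Matrix.coe_units_inv] at hAper ⊢
  simpa only [zero_add, hSM, hΦ0, one_mul] using
    monodromy_factorization_general hA hAper hfund 0 M
end
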